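/- arXiv:2206.01558 — 2 statements merged into one kernel-verified Lean document; each statement's English description precedes it below -/
import Mathlib

section
/- Let f : ℝ^D → ℝ^H be piecewise affine with respect to a finite cover of ℝ^D by convex sets Q_1, …, Q_R, with affine pieces f(x) = V_l x + a_l on Q_l, and suppose V_l ≠ 0 for every l. Then the set of x ∈ ℝ^D for which ‖f(δ·x)‖ does not tend to ∞ as δ → ∞ is contained in the finite union of the kernels ⋃_{l=1}^R ker V_l, each of which is a proper linear subspace of ℝ^D; in particular this exceptional set has Lebesgue measure zero. -/
open Filter MeasureTheory

/-!
If no `V i` annihilates `x`, each of the finitely many functions `δ ↦ V i (δ • x) + a i` leaves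
every bounded set, and finiteness makes the escape simultaneous for all `i`. Along the ray through
`x`, `f` always agrees with one of these functions, whichever piece the ray is currently in.
-/

section Escape

open Bornology

theorem tendsto_of_eventually_exists_eq {ι α β : Type*} [Finite ι] {l : Filter α} {l' : Filter β}
    {g : ι → α → β} {f : α → β} (hg : ∀ i, Tendsto (g i) l l')
    (hf : ∀ᶠ x in l, ∃ i, f x = g i x) : Tendsto f l l' := by
  refine tendsto_def.2 fun s hs => ?_
  filter_upwards [eventually_all.2 fun i => hg i hs, hf] with x hx ⟨i, hi⟩
  rw [Set.mem_preimage, hi]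
  exact hx i

variable {𝕜 E F : Type*} [NormedField 𝕜] [NormedAddCommGroup F] [NormedSpace 𝕜 F]

theorem tendsto_smul_const_add_const_cobounded {v : F} (hv : v ≠ 0) (w : F) :
    Tendsto (fun c : 𝕜 => c • v + w) (cobounded 𝕜) (cobounded F) := by
  have h_smul : Tendsto (fun c : 𝕜 => c • v) (cobounded 𝕜) (cobounded F) := by
    simp only [← tendsto_norm_atTop_iff_cobounded, norm_smul]
    exact tendsto_norm_cobounded_atTop.atTop_mul_const (norm_pos_iff.2 hv)
  exact (tendsto_add_const_cobounded w).comp h_smul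

theorem tendsto_smul_cobounded_of_piecewise_affine [AddCommGroup E] [Module 𝕜 E] {ι : Type*}
    [Finite ι] {V : ι → E →ₗ[𝕜] F} {a : ι → F} {f : E → F} (hf : ∀ x, ∃ i, f x = V i x + a i)
    {x : E} (hx : ∀ i, V i x ≠ 0) :
    Tendsto (fun c : 𝕜 => f (c • x)) (cobounded 𝕜) (cobounded F) := by
  refine tendsto_of_eventually_exists_eq
    (fun i => tendsto_smul_const_add_const_cobounded (hx i) (a i)) (.of_forall fun c => ?_)
  simpa only [map_smul] using hf (c • x)

end Escape

section Kernels

variable {ι E F : Type*}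

theorem setOf_not_tendsto_norm_atTop_subset_iUnion_ker [AddCommGroup E] [Module ℝ E]
    [NormedAddCommGroup F] [NormedSpace ℝ F] [Finite ι] {V : ι → E →ₗ[ℝ] F} {a : ι → F} {f : E → F}
    (hf : ∀ x, ∃ i, f x = V i x + a i) :
    {x : E | ¬ Tendsto (fun δ : ℝ => ‖f (δ • x)‖) atTop atTop} ⊆
      ⋃ i, (LinearMap.ker (V i) : Set E) := by
  intro x hx
  by_contra hker
  simp only [Set.mem_iUnion, SetLike.mem_coe, LinearMap.mem_ker, not_exists] at hker
  refine hx (tendsto_norm_atTop_iff_cobounded.2 ?_)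
  exact (tendsto_smul_cobounded_of_piecewise_affine hf hker).mono_left
    IsOrderBornology.atTop_le_cobounded

theorem measure_iUnion_ker_eq_zero [NormedAddCommGroup E] [NormedSpace ℝ E] [MeasurableSpace E]
    [BorelSpace E] [FiniteDimensional ℝ E] (μ : Measure E) [μ.IsAddHaarMeasure] [AddCommGroup F]
    [Module ℝ F] [Countable ι] {V : ι → E →ₗ[ℝ] F} (hV : ∀ i, V i ≠ 0) :
    μ (⋃ i, (LinearMap.ker (V i) : Set E)) = 0 :=
  measure_iUnion_null fun i => μ.addHaar_submodule _ (LinearMap.ker_eq_top.not.2 (hV i))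

theorem piecewise_affine_exceptional_set_measure_zero_general [NormedAddCommGroup E]
    [NormedSpace ℝ E] [MeasurableSpace E] [BorelSpace E] [FiniteDimensional ℝ E] (μ : Measure E)
    [μ.IsAddHaarMeasure] [NormedAddCommGroup F] [NormedSpace ℝ F] [Finite ι] {V : ι → E →ₗ[ℝ] F}
    {a : ι → F} {f : E → F} (hf : ∀ x, ∃ i, f x = V i x + a i) (hV : ∀ i, V i ≠ 0) :
    {x : E | ¬ Tendsto (fun δ : ℝ => ‖f (δ • x)‖) atTop atTop} ⊆
      (⋃ i, (LinearMap.ker (V i) : Set E)) ∧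
    (∀ i, (LinearMap.ker (V i) : Set E) ≠ Set.univ) ∧
    μ {x : E | ¬ Tendsto (fun δ : ℝ => ‖f (δ • x)‖) atTop atTop} = 0 := by
  have h_subset := setOf_not_tendsto_norm_atTop_subset_iUnion_ker hf
  refine ⟨h_subset, fun i => ?_, measure_mono_null h_subset (measure_iUnion_ker_eq_zero μ hV)⟩
  rw [Ne, Submodule.coe_eq_univ, LinearMap.ker_eq_top]
  exact hV i

end Kernels

/-- The exceptional set of Lemma A.2: the set of `x` for which `‖f (δ • x)‖` does not
tend to infinity is contained in the finite union of the kernels `ker (V l)`, each a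
proper linear subspace; in particular it has Lebesgue measure zero. -/
theorem piecewise_affine_exceptional_set_measure_zero
    (D H R : ℕ)
    (Q : Fin R → Set (EuclideanSpace ℝ (Fin D)))
    (V : Fin R → (EuclideanSpace ℝ (Fin D) →ₗ[ℝ] EuclideanSpace ℝ (Fin H)))
    (a : Fin R → EuclideanSpace ℝ (Fin H))
    (f : EuclideanSpace ℝ (Fin D) → EuclideanSpace ℝ (Fin H))
    (hconv : ∀ l, Convex ℝ (Q l))
    (hcover : (⋃ l, Q l) = Set.univ)
    (hf : ∀ l, ∀ x ∈ Q l, f x = V l x + a l)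
    (hV : ∀ l, V l ≠ 0) :
    {x : EuclideanSpace ℝ (Fin D) |
        ¬ Tendsto (fun δ : ℝ => ‖f (δ • x)‖) atTop atTop}
      ⊆ (⋃ l, (LinearMap.ker (V l) : Set (EuclideanSpace ℝ (Fin D)))) ∧
    (∀ l, (LinearMap.ker (V l) : Set (EuclideanSpace ℝ (Fin D))) ≠ Set.univ) ∧
    volume {x : EuclideanSpace ℝ (Fin D) |
        ¬ Tendsto (fun δ : ℝ => ‖f (δ • x)‖) atTop atTop} = 0 :=
  piecewise_affine_exceptional_set_measure_zero_general volume
    (fun x => (Set.iUnion_eq_univ_iff.1 hcover x).imp fun l => hf l x) hV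
end

section
/- Let f : ℝ^D → ℝ^H be piecewise affine with respect to a finite cover of ℝ^D by convex sets Q_1, …, Q_R, with affine pieces f(x) = V_l x + a_l on Q_l, and let x ∈ ℝ^D satisfy V_l x ≠ 0 for every l. Let p : ℝ^H → ℝ be Lebesgue integrable, Lipschitz continuous, and nonnegative. Fix a prior evidence n_prior > 0 and prior parameters χ_prior ∈ ℝ^m, a constant c > 0, a bounded function χ : ℝ^H → ℝ^m, and define the evidence n(z) = c·p(z) and the posterior parameters χ_post(z) = (n_prior·χ_prior + n(z)·χ(z)) / (n_prior + n(z)) and n_post(z) = n_prior + n(z). Then χ_post(f(δ·x)) → χ_prior and n_post(f(δ·x)) → n_prior as δ → ∞. -/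
open Filter MeasureTheory

/-! The representation `f (δ • x)` is at every `δ` one of the finitely many points
`δ • V l x + a l`, all of which escape to infinity. An integrable uniformly continuous density
vanishes at infinity: by uniform continuity the superlevel set `{ε ≤ ‖p‖}` has a thickening inside
`{ε / 2 ≤ ‖p‖}`, which has finite measure, and a set with a thickening of finite Haar measure is
bounded because every one of its points contributes a ball of the same positive measure. So the
evidence tends to `0` along the ray, and so does its product with the bounded `χ`. -/

open Bornology Metric Set
open scoped ENNReal Topology

section Bounded

variable {X : Type*} [PseudoMetricSpace X] [MeasurableSpace X] [OpensMeasurableSpace X]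
  {μ : Measure X} {s : Set X}

lemma tendsto_measure_sdiff_closedBall_atTop (hs : μ s ≠ ∞) (x : X) :
    Tendsto (fun n : ℕ => μ (s \ closedBall x n)) atTop (𝓝 0) := by
  have hmeas (n : ℕ) : MeasurableSet (closedBall x n)ᶜ := isClosed_closedBall.measurableSet.compl
  have hanti : Antitone fun n : ℕ => (closedBall x (n : ℝ))ᶜ := fun _ _ hmn =>
    compl_subset_compl.2 (closedBall_subset_closedBall (Nat.cast_le.2 hmn))
  have h := tendsto_measure_iInter_atTop (μ := μ.restrict s)
    (fun n => (hmeas n).nullMeasurableSet) hanti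
    ⟨0, measure_ne_top_of_subset (subset_univ _) (by rwa [Measure.restrict_apply_univ])⟩
  rw [← compl_iUnion, iUnion_closedBall_nat, compl_univ, measure_empty] at h
  refine h.congr fun n => ?_
  simp only [Function.comp_apply, Measure.restrict_apply (hmeas n), inter_comm, sdiff_eq]

lemma isBounded_of_measure_thickening_ne_top {r : ℝ} {v : ℝ≥0∞} (hv : v ≠ 0)
    (hball : ∀ y ∈ s, v ≤ μ (ball y r)) (hs : μ (thickening r s) ≠ ∞) : IsBounded s := by
  rcases s.eq_empty_or_nonempty with rfl | ⟨x, -⟩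
  · exact isBounded_empty
  obtain ⟨n, hn⟩ :=
    ((tendsto_measure_sdiff_closedBall_atTop hs x).eventually_lt_const (pos_of_ne_zero hv)).exists
  refine isBounded_closedBall.subset (t := closedBall x (n + r)) fun y hy => ?_
  by_contra hfar
  have hsub : ball y r ⊆ thickening r s \ closedBall x n := fun z hz => by
    refine ⟨ball_subset_thickening hy r hz, fun hzx => hfar ?_⟩
    rw [mem_ball'] at hz
    rw [mem_closedBall] at hzx ⊢
    linarith [dist_triangle y z x]
  exact ((hball y hy).trans (measure_mono hsub)).not_gt hn

end Bounded

lemma tendsto_cobounded_zero_of_integrable_of_uniformContinuous {E F : Type*}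
    [NormedAddCommGroup E] [MeasurableSpace E] [BorelSpace E] {μ : Measure E} [μ.IsAddHaarMeasure]
    [NormedAddCommGroup F] {p : E → F} (hint : Integrable p μ) (hp : UniformContinuous p) :
    Tendsto p (cobounded E) (𝓝 0) := by
  refine Metric.tendsto_nhds.2 fun ε hε => ?_
  obtain ⟨r, hr, hclose⟩ := Metric.uniformContinuous_iff.1 hp (ε / 2) (half_pos hε)
  have hsub : thickening r {y | ε ≤ ‖p y‖} ⊆ {y | ε / 2 ≤ ‖p y‖} := fun z hz => by
    obtain ⟨y, hy, hzy⟩ := mem_thickening_iff.1 hz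
    have hpyz : ‖p y - p z‖ < ε / 2 := by
      simpa only [dist_eq_norm] using hclose (dist_comm z y ▸ hzy)
    rw [mem_ofPred_eq] at hy ⊢
    linarith [norm_sub_norm_le (p y) (p z)]
  have hfin : μ (thickening r {y | ε ≤ ‖p y‖}) ≠ ∞ :=
    ((measure_mono hsub).trans_lt (hint.measure_norm_ge_lt_top (half_pos hε))).ne
  have hbdd : IsBounded {y | ε ≤ ‖p y‖} :=
    isBounded_of_measure_thickening_ne_top (measure_ball_pos μ 0 hr).ne'
      (fun y _ => (Measure.addHaar_ball_center μ y r).ge) hfin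
  filter_upwards [isBounded_def.1 hbdd] with y hy
  simpa only [dist_zero_right, mem_compl_iff, mem_ofPred_eq, not_le] using hy

section Ray

variable {E F ι : Type*} [AddCommMonoid E] [Module ℝ E] [NormedAddCommGroup F] [NormedSpace ℝ F]

lemma tendsto_smul_add_const_cobounded {v : F} (hv : v ≠ 0) (b : F) :
    Tendsto (fun t : ℝ => t • v + b) atTop (cobounded F) := by
  refine (tendsto_add_const_cobounded b).comp (tendsto_norm_atTop_iff_cobounded.1 ?_)
  simpa only [norm_smul] using tendsto_norm_atTop_atTop.atTop_mul_const (norm_pos_iff.2 hv)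

lemma tendsto_ray_cobounded_of_finite_affine_pieces [Finite ι] {f : E → F}
    {V : ι → E →ₗ[ℝ] F} {a : ι → F} (hf : ∀ y, ∃ l, f y = V l y + a l)
    {x : E} (hx : ∀ l, V l x ≠ 0) :
    Tendsto (fun t : ℝ => f (t • x)) atTop (cobounded F) := by
  refine tendsto_def.2 fun s hs => ?_
  have hpieces : ∀ᶠ t : ℝ in atTop, ∀ l, t • V l x + a l ∈ s :=
    eventually_all.2 fun l => tendsto_smul_add_const_cobounded (hx l) (a l) hs
  filter_upwards [hpieces] with t ht
  obtain ⟨l, hl⟩ := hf (t • x)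
  rw [mem_preimage, hl, map_smul]
  exact ht l

end Ray

section Posterior

variable {𝕜 P : Type*}

/-- The parameters `χ_post` of the conjugate Bayesian update: the average of the prior parameters
`χ₀` and the observed parameters `χ`, weighted by the prior evidence `n₀` and the observed evidence
`n`. As division by zero is zero, it is meaningful only for `n₀ + n ≠ 0`. -/
def posteriorParams [Field 𝕜] [AddCommGroup P] [Module 𝕜 P] (n₀ n : 𝕜) (χ₀ χ : P) : P :=
  (n₀ + n)⁻¹ • (n₀ • χ₀ + n • χ)

lemma tendsto_posteriorParams_of_tendsto_zero [NormedField 𝕜] [NormedAddCommGroup P]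
    [NormedSpace 𝕜 P] {α : Type*} {l : Filter α} {n₀ : 𝕜} {n : α → 𝕜} {χ : α → P} (hn₀ : n₀ ≠ 0)
    (hn : Tendsto n l (𝓝 0)) (hχ : IsBoundedUnder (· ≤ ·) l (norm ∘ χ)) (χ₀ : P) :
    Tendsto (fun t => posteriorParams n₀ (n t) χ₀ (χ t)) l (𝓝 χ₀) := by
  have hweight : Tendsto (fun t => (n₀ + n t)⁻¹) l (𝓝 n₀⁻¹) := by
    simpa only [add_zero] using (hn.const_add n₀).inv₀ (by rwa [add_zero])
  have hsum : Tendsto (fun t => n₀ • χ₀ + n t • χ t) l (𝓝 (n₀ • χ₀)) := by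
    simpa only [add_zero] using (hn.zero_smul_isBoundedUnder_le hχ).const_add (n₀ • χ₀)
  simpa only [posteriorParams, inv_smul_smul₀ hn₀] using hweight.smul hsum

end Posterior

theorem natpn_posterior_tendsto_prior_general {E F P ι : Type*} [AddCommMonoid E] [Module ℝ E]
    [NormedAddCommGroup F] [NormedSpace ℝ F] [MeasurableSpace F] [BorelSpace F]
    {μ : Measure F} [μ.IsAddHaarMeasure] [NormedAddCommGroup P] [NormedSpace ℝ P] [Finite ι]
    {f : E → F} {V : ι → E →ₗ[ℝ] F} {a : ι → F} (hf : ∀ y, ∃ l, f y = V l y + a l)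
    {x : E} (hx : ∀ l, V l x ≠ 0)
    {p : F → ℝ} (hint : Integrable p μ) (hp : UniformContinuous p)
    {nprior : ℝ} (hnprior : nprior ≠ 0) (χprior : P) (c : ℝ)
    {χ : F → P} (hχ : ∃ M : ℝ, ∀ z, ‖χ z‖ ≤ M) :
    Tendsto (fun δ : ℝ => posteriorParams nprior (c * p (f (δ • x))) χprior (χ (f (δ • x))))
      atTop (𝓝 χprior) ∧
    Tendsto (fun δ : ℝ => nprior + c * p (f (δ • x))) atTop (𝓝 nprior) := by
  have hray := tendsto_ray_cobounded_of_finite_affine_pieces hf hx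
  have hdensity := (tendsto_cobounded_zero_of_integrable_of_uniformContinuous hint hp).comp hray
  have hevidence : Tendsto (fun δ : ℝ => c * p (f (δ • x))) atTop (𝓝 0) := by
    simpa only [mul_zero, Function.comp_apply] using hdensity.const_mul c
  obtain ⟨M, hM⟩ := hχ
  refine ⟨tendsto_posteriorParams_of_tendsto_zero hnprior hevidence
    (isBoundedUnder_of ⟨M, fun δ => hM (f (δ • x))⟩) χprior, ?_⟩
  simpa only [add_zero] using hevidence.const_add nprior

/-- For inputs far from the training data (along rays `δ • x`), the prior takes over
in the Posterior Network update: the posterior parameters `χ_post` tend to the prior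
parameters `χ_prior`, and the posterior evidence `n_post` tends to the prior evidence
`n_prior`. -/
theorem natpn_posterior_tendsto_prior
    (D H R m : ℕ)
    (Q : Fin R → Set (EuclideanSpace ℝ (Fin D)))
    (V : Fin R → (EuclideanSpace ℝ (Fin D) →ₗ[ℝ] EuclideanSpace ℝ (Fin H)))
    (a : Fin R → EuclideanSpace ℝ (Fin H))
    (f : EuclideanSpace ℝ (Fin D) → EuclideanSpace ℝ (Fin H))
    (hconv : ∀ l, Convex ℝ (Q l))
    (hcover : (⋃ l, Q l) = Set.univ)
    (hf : ∀ l, ∀ x ∈ Q l, f x = V l x + a l)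
    (x : EuclideanSpace ℝ (Fin D))
    (hx : ∀ l, V l x ≠ 0)
    (p : EuclideanSpace ℝ (Fin H) → ℝ)
    (hint : Integrable p volume)
    (L : NNReal) (hLip : LipschitzWith L p)
    (hp : ∀ z, 0 ≤ p z)
    (nprior : ℝ) (hnprior : 0 < nprior)
    (χprior : EuclideanSpace ℝ (Fin m))
    (c : ℝ) (hc : 0 < c)
    (χ : EuclideanSpace ℝ (Fin H) → EuclideanSpace ℝ (Fin m))
    (hχ : ∃ M : ℝ, ∀ z, ‖χ z‖ ≤ M)
    (n : EuclideanSpace ℝ (Fin H) → ℝ)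
    (hn : ∀ z, n z = c * p z)
    (χpost : EuclideanSpace ℝ (Fin H) → EuclideanSpace ℝ (Fin m))
    (hχpost : ∀ z, χpost z = (nprior + n z)⁻¹ • (nprior • χprior + n z • χ z))
    (npost : EuclideanSpace ℝ (Fin H) → ℝ)
    (hnpost : ∀ z, npost z = nprior + n z) :
    Tendsto (fun δ : ℝ => χpost (f (δ • x))) atTop (nhds χprior) ∧
    Tendsto (fun δ : ℝ => npost (f (δ • x))) atTop (nhds nprior) := by
  simpa only [hχpost, hnpost, hn, posteriorParams] using natpn_posterior_tendsto_prior_general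
    (fun y => (iUnion_eq_univ_iff.1 hcover y).imp fun l hl => hf l y hl)
    hx hint hLip.uniformContinuous hnprior.ne' χprior c hχ
end
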